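/- arXiv:1304.1639 — 2 statements merged into one kernel-verified Lean document; each statement's English description precedes it below -/
import Mathlib

section
/- Let S be a finite alphabet with complementation and let d ≤ 3. Every polybox code V ⊆ S^d which does not contain a twin pair is rigid and satisfies |V| ≤ 5. -/
/-- `ES` is the set of all `B ⊆ S` containing exactly one letter from each
complementary pair `{s, s'}`. -/
def ESet {S : Type*} (c : S → S) : Set (Set S) :=
  {B | ∀ s, s ∈ B ↔ c s ∉ B}

/-- `Es = {B ∈ ES : s ∈ B}`. -/
def Eltr {S : Type*} (c : S → S) (s : S) : Set (Set S) :=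
  {B | B ∈ ESet c ∧ s ∈ B}

/-- The equicomplementary realization `v̌ = Ev₁ × ⋯ × Ev_d` of a word `v ∈ S^d`,
viewed as a box in the `d`-box `(ES)^d`. -/
def realize {S : Type*} (c : S → S) {d : ℕ} (v : Fin d → S) :
    Set (Fin d → Set S) :=
  {B | ∀ i, B i ∈ Eltr c (v i)}

/-- Words `u, v ∈ S^d` are dichotomous: some coordinate carries complementary
letters. -/
def Dichotomous {S : Type*} (c : S → S) {d : ℕ} (u v : Fin d → S) : Prop :=
  ∃ j, v j = c (u j)

/-- Words `u, v ∈ S^d` form a twin pair. -/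
def TwinPair {S : Type*} (c : S → S) {d : ℕ} (u v : Fin d → S) : Prop :=
  ∃ j, v j = c (u j) ∧ ∀ i, i ≠ j → u i = v i

/-- A polybox code: a set of pairwise dichotomous words. -/
def PolyboxCode {S : Type*} (c : S → S) {d : ℕ} (V : Set (Fin d → S)) : Prop :=
  ∀ u ∈ V, ∀ v ∈ V, u ≠ v → Dichotomous c u v

/-- Polybox codes `V, W ⊆ S^d` are equivalent if
`⋃_{v ∈ V} v̌ = ⋃_{w ∈ W} w̌`. -/
def Equivalent {S : Type*} (c : S → S) {d : ℕ}
    (V W : Set (Fin d → S)) : Prop :=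
  (⋃ v ∈ V, realize c v) = ⋃ w ∈ W, realize c w

/-- A polybox code `V ⊆ S^d` is rigid if every polybox code equivalent to `V`
equals `V`. -/
def Rigid {S : Type*} (c : S → S) {d : ℕ} (V : Set (Fin d → S)) : Prop :=
  ∀ W : Set (Fin d → S), PolyboxCode c W → Equivalent c V W → W = V

/-- A set of pairwise non-complementary letters extends to a transversal. -/
theorem exists_ESet_extend {S : Type*} (c : S → S)
    (hinv : ∀ s, c (c s) = s) (hne : ∀ s, c s ≠ s) (L : Set S)
    (hL : ∀ x ∈ L, c x ∉ L) : ∃ B ∈ ESet c, L ⊆ B := by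
  classical
  let _ : LinearOrder S := linearOrderOfSTO (WellOrderingRel (α := S))
  refine ⟨{s | s ∈ L ∨ (c s ∉ L ∧ s < c s)}, ?_, fun x hx => Or.inl hx⟩
  intro s
  have h1 := hL s
  have h2 := hL (c s)
  have h3 := hinv s
  have h4 := lt_trichotomy s (c s)
  have h5 := hne s
  have h6 : s < c s → ¬ c s < s := fun h => not_lt_of_gt h
  simp only [Set.mem_ofPred_eq, h3] at *
  grind

section
variable {S : Type*} (c : S → S)

/-- Three words of a twin pair free code cannot share a letter. -/
theorem no_three (hinv : ∀ s, c (c s) = s) (hne : ∀ s, c s ≠ s)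
    {V : Set (Fin 3 → S)} {i j k : Fin 3} 
    (D : ∀ u ∈ V, ∀ v ∈ V, u ≠ v →
      v i = c (u i) ∨ v j = c (u j) ∨ v k = c (u k))
    (Tj : ∀ u ∈ V, ∀ v ∈ V, v j = c (u j) → u i = v i → u k = v k → False)
    (Tk : ∀ u ∈ V, ∀ v ∈ V, v k = c (u k) → u i = v i → u j = v j → False)
    (x y z : Fin 3 → S) (hx : x ∈ V) (hy : y ∈ V) (hz : z ∈ V)
    (hxy : x ≠ y) (hxz : x ≠ z) (hyz : y ≠ z) (h1 : x i = y i) (h2 : x i = z i) :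
    False := by
  have d1 := D x hx y hy hxy
  have d2 := D x hx z hz hxz
  have d3 := D y hy z hz hyz
  have a1 := Tj x hx y hy
  have a2 := Tj x hx z hz
  have a3 := Tj y hy z hz
  have b1 := Tk x hx y hy
  have b2 := Tk x hx z hz
  have b3 := Tk y hy z hz
  have e1 := hne (x i)
  have f1 := hinv (x j)
  have f2 := hinv (y j)
  have f3 := hinv (x k)
  have f4 := hinv (y k)
  have e2 := hne (x j)
  have e3 := hne (x k)
  have e4 := hne (y j)
  have e5 := hne (y k)
  grind

theorem dich_ijk {V : Set (Fin 3 → S)} (hV : PolyboxCode c V)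
    {i j k : Fin 3} (hijk : ∀ l : Fin 3, l = i ∨ l = j ∨ l = k) :
    ∀ u ∈ V, ∀ v ∈ V, u ≠ v →
      v i = c (u i) ∨ v j = c (u j) ∨ v k = c (u k) := by
  intro u hu v hv huv
  obtain ⟨l, hl⟩ := hV u hu v hv huv
  rcases hijk l with rfl | rfl | rfl <;> simp [hl]

theorem twin_ijk {V : Set (Fin 3 → S)} (hT : ∀ u ∈ V, ∀ v ∈ V, ¬ TwinPair c u v)
    {i j k : Fin 3} (hijk : ∀ l : Fin 3, l = i ∨ l = j ∨ l = k) :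
    ∀ u ∈ V, ∀ v ∈ V, v i = c (u i) → u j = v j → u k = v k → False := by
  intro u hu v hv h1 h2 h3
  refine hT u hu v hv ⟨i, h1, fun l hl => ?_⟩
  rcases hijk l with rfl | rfl | rfl
  · exact absurd rfl hl
  · exact h2
  · exact h3

/-- Two words sharing a letter in a code with six words lead to a contradiction. -/
theorem no_six_aux [Fintype S] (hinv : ∀ s, c (c s) = s) (hne : ∀ s, c s ≠ s)
    {V : Set (Fin 3 → S)} {i j k : Fin 3}
    (D : ∀ u ∈ V, ∀ v ∈ V, u ≠ v →
      v i = c (u i) ∨ v j = c (u j) ∨ v k = c (u k))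
    (Ti : ∀ u ∈ V, ∀ v ∈ V, v i = c (u i) → u j = v j → u k = v k → False)
    (Tj : ∀ u ∈ V, ∀ v ∈ V, v j = c (u j) → u i = v i → u k = v k → False)
    (Tk : ∀ u ∈ V, ∀ v ∈ V, v k = c (u k) → u i = v i → u j = v j → False)
    (u v : Fin 3 → S) (hu : u ∈ V) (hv : v ∈ V) (huv : u ≠ v)
    (hi : u i = v i) (hj : v j = c (u j)) :
    Set.ncard V ≤ 5 := by
  classical
  rw [Set.ncard_eq_toFinset_card']
  set F := V.toFinset with hF
  have mF : ∀ x, x ∈ F ↔ x ∈ V := fun x => by simp [hF]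
  let P := F.filter (fun x => x i = c (u i))
  let X1 := F.filter (fun x => (x j = c (u j) ∧ x k = c (v k)) ∧ x i ≠ c (u i) ∧ x ≠ u ∧ x ≠ v)
  let X2 := F.filter (fun x => (x j = u j ∧ x k = c (u k)) ∧ x i ≠ c (u i) ∧ x ≠ u ∧ x ≠ v)
  have hP : P.card ≤ 2 := by
    by_contra! h
    obtain ⟨x, y, z, hx, hy, hz, hxy, hxz, hyz⟩ := Finset.two_lt_card_iff.1 h
    simp only [P, Finset.mem_filter, mF] at hx hy hz
    exact no_three c hinv hne D Tj Tk x y z hx.1 hy.1 hz.1 hxy hxz hyz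
      (hx.2.trans hy.2.symm) (hx.2.trans hz.2.symm)
  have hX1 : X1.card ≤ 1 := by
    refine Finset.card_le_one.2 fun x hx y hy => ?_
    simp only [X1, Finset.mem_filter, mF] at hx hy
    by_contra hxy
    have := D x hx.1 y hy.1 hxy
    have := Ti x hx.1 y hy.1
    have := hne (y j)
    have := hne (y k)
    grind
  have hX2 : X2.card ≤ 1 := by
    refine Finset.card_le_one.2 fun x hx y hy => ?_
    simp only [X2, Finset.mem_filter, mF] at hx hy
    by_contra hxy
    have := D x hx.1 y hy.1 hxy
    have := Ti x hx.1 y hy.1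
    have := hne (y j)
    have := hne (y k)
    grind
  have hsub : F ⊆ {u, v} ∪ P ∪ X1 ∪ X2 := by
    intro x hx
    rw [mF] at hx
    by_cases h1 : x = u
    · simp [h1]
    by_cases h2 : x = v
    · simp [h2]
    have d1 := D u hu x hx (Ne.symm h1)
    have d2 := D v hv x hx (Ne.symm h2)
    have t := Tj u hu v hv hj hi
    simp only [P, X1, X2, Finset.mem_union, Finset.mem_filter, mF, Finset.mem_insert,
      Finset.mem_singleton]
    have := hinv (u j)
    have := hinv (u k)
    have := hinv (v k)
    have := hne (u j)
    grind
  have hc : F.card ≤ ({u, v} : Finset (Fin 3 → S)).card + P.card + X1.card + X2.card := by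
    refine (Finset.card_le_card hsub).trans ?_
    have a1 := Finset.card_union_le ({u, v} ∪ P ∪ X1) X2
    have a2 := Finset.card_union_le ({u, v} ∪ P) X1
    have a3 := Finset.card_union_le ({u, v} : Finset (Fin 3 → S)) P
    omega
  have h2 : ({u, v} : Finset (Fin 3 → S)).card ≤ 2 := Finset.card_le_two
  by_contra! h6
  obtain ⟨p, hp, q, hq, hpq⟩ := Finset.one_lt_card.1 (show 1 < P.card by omega)
  obtain ⟨x, hx⟩ := Finset.card_pos.1 (show 0 < X1.card by omega)
  obtain ⟨y, hy⟩ := Finset.card_pos.1 (show 0 < X2.card by omega)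
  simp only [P, X1, X2, Finset.mem_filter, mF] at hp hq hx hy
  obtain ⟨hxV, ⟨hxj, hxk⟩, hxi, hxu, hxv⟩ := hx
  obtain ⟨hyV, ⟨hyj, hyk⟩, hyi, hyu, hyv⟩ := hy
  have hxi' : u i ≠ x i := fun h =>
    no_three c hinv hne D Tj Tk u v x hu hv hxV huv (Ne.symm hxu) (Ne.symm hxv) hi h
  have D' : ∀ u ∈ V, ∀ v ∈ V, u ≠ v →
      v j = c (u j) ∨ v i = c (u i) ∨ v k = c (u k) := by
    intro u hu v hv h
    have := D u hu v hv h
    tauto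
  have key : ∀ p ∈ V, p i = c (u i) → p j ≠ u j ∧ p k = v k := by
    intro p hp hpi
    have pu : u ≠ p := by rintro rfl; exact hne _ hpi.symm
    have pv : v ≠ p := by rintro rfl; exact hne _ (hi.trans hpi).symm
    have pnx : x ≠ p := by rintro rfl; exact hxi hpi
    have pny : y ≠ p := by rintro rfl; exact hyi hpi
    have px : v j ≠ p j := fun h =>
      no_three c hinv hne D' (fun u hu v hv h1 h2 h3 => Ti u hu v hv h1 h2 h3)
        (fun u hu v hv h1 h2 h3 => Tk u hu v hv h1 h3 h2) v x p hv hxV hp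
        (Ne.symm hxv) pv pnx (hj.trans hxj.symm) h
    have py : u j ≠ p j := fun h =>
      no_three c hinv hne D' (fun u hu v hv h1 h2 h3 => Ti u hu v hv h1 h2 h3)
        (fun u hu v hv h1 h2 h3 => Tk u hu v hv h1 h3 h2) u y p hu hyV hp
        (Ne.symm hyu) pu pny hyj.symm h
    have d := D x hxV p hp pnx
    have := hinv (u j)
    have := hinv (v k)
    have := hinv (u i)
    have := hinv (x i)
    grind
  have kp := key p hp.1 hp.2
  have kq := key q hq.1 hq.2
  have d := D p hp.1 q hq.1 hpq
  have t := Tj p hp.1 q hq.1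
  have := hne (u i)
  have := hne (v k)
  have := hinv (u i)
  grind

theorem third_index : ∀ j i : Fin 3, j ≠ i →
    ∃ k : Fin 3, ∀ l : Fin 3, l = i ∨ l = j ∨ l = k := by decide

theorem no_six [Fintype S] (hinv : ∀ s, c (c s) = s) (hne : ∀ s, c s ≠ s)
    {V : Set (Fin 3 → S)} (hV : PolyboxCode c V)
    (hT : ∀ u ∈ V, ∀ v ∈ V, ¬ TwinPair c u v) : V.ncard ≤ 5 := by
  classical
  by_contra! h6
  have h6' := h6
  rw [Set.ncard_eq_toFinset_card'] at h6
  obtain ⟨v0, hv0⟩ := Finset.card_pos.1 (show 0 < V.toFinset.card by omega)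
  have hcard : (V.toFinset.erase v0).card = V.toFinset.card - 1 :=
    Finset.card_erase_of_mem hv0
  have hd : ∀ x : Fin 3 → S, ∃ l : Fin 3, x ∈ V.toFinset.erase v0 → x l = c (v0 l) := by
    intro x
    by_cases hx : x ∈ V.toFinset.erase v0
    · simp only [Finset.mem_erase, Set.mem_toFinset] at hx hv0
      obtain ⟨l, hl⟩ := hV v0 hv0 x hx.2 (Ne.symm hx.1)
      exact ⟨l, fun _ => hl⟩
    · exact ⟨0, fun h => absurd h hx⟩
  choose f hf using hd
  obtain ⟨x, hx, y, hy, hxy, hfxy⟩ := Finset.exists_ne_map_eq_of_card_lt_of_maps_to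
    (s := V.toFinset.erase v0) (t := (Finset.univ : Finset (Fin 3)))
    (by simp only [Finset.card_univ, Fintype.card_fin]; omega)
    (f := f) (fun _ _ => Finset.mem_coe.2 (Finset.mem_univ _))
  have hi : x (f x) = y (f x) := by rw [hf x hx, hfxy, hf y hy]
  have hxV : x ∈ V := by simpa using (Finset.mem_erase.1 hx).2
  have hyV : y ∈ V := by simpa using (Finset.mem_erase.1 hy).2
  obtain ⟨j, hj⟩ := hV x hxV y hyV hxy
  have hij : j ≠ f x := by
    rintro rfl
    exact hne _ (hj.symm.trans hi.symm)
  obtain ⟨k, hk⟩ : ∃ k : Fin 3, ∀ l : Fin 3, l = f x ∨ l = j ∨ l = k := by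
    exact third_index j (f x) hij
  refine absurd (no_six_aux c hinv hne (dich_ijk c hV hk) (twin_ijk c hT hk)
    (twin_ijk c hT (fun l => ?_)) (twin_ijk c hT (fun l => ?_)) x y hxV hyV hxy hi hj) (by omega)
  · have := hk l
    tauto
  · have := hk l
    tauto

/-- Covering of a box, in terms of letters. -/
theorem cover_letters (hinv : ∀ s, c (c s) = s) (hne : ∀ s, c s ≠ s)
    {V : Set (Fin 3 → S)} {w : Fin 3 → S}
    (hcov : realize c w ⊆ ⋃ v ∈ V, realize c v)
    {i j k : Fin 3} (hij : i ≠ j) (hik : i ≠ k) (hjk : j ≠ k)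
    (hijk : ∀ l : Fin 3, l = i ∨ l = j ∨ l = k)
    (Li Lj Lk : Set S) (wi : w i ∈ Li) (wj : w j ∈ Lj) (wk : w k ∈ Lk)
    (hi : ∀ x ∈ Li, c x ∉ Li) (hj : ∀ x ∈ Lj, c x ∉ Lj) (hk : ∀ x ∈ Lk, c x ∉ Lk) :
    ∃ v ∈ V, (∀ x ∈ Li, v i ≠ c x) ∧ (∀ x ∈ Lj, v j ≠ c x) ∧ (∀ x ∈ Lk, v k ≠ c x) := by
  obtain ⟨Bi, hBi, hi'⟩ := exists_ESet_extend c hinv hne Li hi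
  obtain ⟨Bj, hBj, hj'⟩ := exists_ESet_extend c hinv hne Lj hj
  obtain ⟨Bk, hBk, hk'⟩ := exists_ESet_extend c hinv hne Lk hk
  let B : Fin 3 → Set S := fun l => if l = i then Bi else if l = j then Bj else Bk
  have b1 : B i = Bi := by simp [B]
  have b2 : B j = Bj := by simp [B, hij.symm]
  have b3 : B k = Bk := by simp [B, hik.symm, hjk.symm]
  have hB : B ∈ realize c w := by
    intro l
    rcases hijk l with rfl | rfl | rfl
    · rw [b1]; exact ⟨hBi, hi' wi⟩
    · rw [b2]; exact ⟨hBj, hj' wj⟩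
    · rw [b3]; exact ⟨hBk, hk' wk⟩
  obtain ⟨v, hv, hvB⟩ := Set.mem_iUnion₂.1 (hcov hB)
  have e1 := hvB i
  have e2 := hvB j
  have e3 := hvB k
  rw [b1] at e1
  rw [b2] at e2
  rw [b3] at e3
  refine ⟨v, hv, fun x hx h => ?_, fun x hx h => ?_, fun x hx h => ?_⟩
  · exact (hBi x).1 (hi' hx) (h ▸ e1.2)
  · exact (hBj x).1 (hj' hx) (h ▸ e2.2)
  · exact (hBk x).1 (hk' hx) (h ▸ e3.2)

theorem nc_three (hinv : ∀ s, c (c s) = s) (hne : ∀ s, c s ≠ s) (a b e : S)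
    (hab : b ≠ c a) (hae : e ≠ c a) (hbe : e ≠ c b) :
    ∀ x ∈ ({a, b, e} : Set S), c x ∉ ({a, b, e} : Set S) := by
  intro x hx
  simp only [Set.mem_insert_iff, Set.mem_singleton_iff] at hx ⊢
  have := hinv a
  have := hinv b
  have := hinv e
  have := hne a
  have := hne b
  have := hne e
  grind

theorem c_ne (hinv : ∀ s, c (c s) = s) {a b : S} (h : a ≠ c b) : b ≠ c a := by
  rintro rfl
  exact h (hinv a).symm

/-- Words covering the flipped box. -/
theorem flip_cov (hinv : ∀ s, c (c s) = s) (hne : ∀ s, c s ≠ s)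
    {V : Set (Fin 3 → S)} {w : Fin 3 → S} (hV : PolyboxCode c V)
    (hcov : realize c w ⊆ ⋃ v ∈ V, realize c v)
    {i j k : Fin 3} (hij : i ≠ j) (hik : i ≠ k) (hjk : j ≠ k)
    (hijk : ∀ l : Fin 3, l = i ∨ l = j ∨ l = k)
    (v : Fin 3 → S) (hv : v ∈ V) (hvw : ∀ l, v l ≠ c (w l)) (hvi : v i ≠ w i)
    (p q : S) (pv : p ≠ c (v j)) (pw : p ≠ c (w j)) (qv : q ≠ c (v k)) (qw : q ≠ c (w k)) :
    ∃ u ∈ V, u i = c (v i) ∧ (u j ≠ c (v j) ∧ u j ≠ c (w j) ∧ u j ≠ c p) ∧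
      (u k ≠ c (v k) ∧ u k ≠ c (w k) ∧ u k ≠ c q) := by
  have i1 : c (v i) ≠ c (w i) := fun h => hvi (by rw [← hinv (v i), h, hinv])
  obtain ⟨u, hu, h1, h2, h3⟩ := cover_letters c hinv hne hcov hij hik hjk hijk
    {w i, c (v i), c (v i)} {w j, v j, p} {w k, v k, q} (by simp) (by simp) (by simp)
    (nc_three c hinv hne _ _ _ i1 i1 (Ne.symm (hne _)))
    (nc_three c hinv hne _ _ _ (hvw j) pw pv) (nc_three c hinv hne _ _ _ (hvw k) qw qv)
  simp only [Set.mem_insert_iff, Set.mem_singleton_iff, forall_eq_or_imp, forall_eq, hinv]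
    at h1 h2 h3
  have huv : v ≠ u := by rintro rfl; exact h1.2.1 rfl
  have hd := dich_ijk c hV hijk v hv u hu huv
  refine ⟨u, hu, ?_, ?_, ?_⟩ <;> tauto

/-- The flip lemma, assuming two words at the flipped place which are complementary at `j`. -/
theorem flip_two (hinv : ∀ s, c (c s) = s) (hne : ∀ s, c s ≠ s)
    {V : Set (Fin 3 → S)} {w : Fin 3 → S} (hV : PolyboxCode c V)
    (hT : ∀ u ∈ V, ∀ v ∈ V, ¬ TwinPair c u v)
    (hcov : realize c w ⊆ ⋃ v ∈ V, realize c v)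
    {i j k : Fin 3} (hij : i ≠ j) (hik : i ≠ k) (hjk : j ≠ k)
    (hijk : ∀ l : Fin 3, l = i ∨ l = j ∨ l = k)
    (v : Fin 3 → S) (hv : v ∈ V) (hvw : ∀ l, v l ≠ c (w l)) (hvi : v i ≠ w i)
    (u u' : Fin 3 → S) (hu : u ∈ V) (hu' : u' ∈ V)
    (hui : u i = c (v i)) (hui' : u' i = c (v i)) (huj : u' j = c (u j))
    (ujv : u j ≠ c (v j)) (ujw : u j ≠ c (w j)) :
    u k = v k ∨ u k = w k := by
  by_contra! hn
  obtain ⟨z, hz, z1, z2, z3⟩ := flip_cov c hinv hne hV hcov hij hik hjk hijk v hv hvw hvi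
    (u j) (c (u k)) ujv ujw (fun h => hn.1 (by rw [← hinv (u k), h, hinv]))
    (fun h => hn.2 (by rw [← hinv (u k), h, hinv]))
  rw [hinv] at z3
  refine no_three c hinv hne (dich_ijk c hV hijk)
    (twin_ijk c hT (fun l => ?_)) (twin_ijk c hT (fun l => ?_)) u u' z hu hu' hz ?_ ?_ ?_
    (hui.trans hui'.symm) (hui.trans z1.symm)
  · have := hijk l
    tauto
  · have := hijk l
    tauto
  · rintro rfl
    exact hne _ huj.symm
  · rintro rfl
    exact z3.2.2 rfl
  · rintro rfl
    exact z2.2.2 huj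

/-- Two words cover the flipped box, complementary at `j`. -/
def FlipTwo (V : Set (Fin 3 → S)) (w v : Fin 3 → S) (i j k : Fin 3) : Prop :=
  ∃ u ∈ V, ∃ u' ∈ V, u i = c (v i) ∧ u' i = c (v i) ∧ u' j = c (u j) ∧
    u k = v k ∧ u' k = w k ∧ u j ≠ c (w j) ∧ u' j ≠ c (w j) ∧ v k ≠ w k

theorem flip_two' (hinv : ∀ s, c (c s) = s) (hne : ∀ s, c s ≠ s)
    {V : Set (Fin 3 → S)} {w : Fin 3 → S} (hV : PolyboxCode c V)
    (hT : ∀ u ∈ V, ∀ v ∈ V, ¬ TwinPair c u v)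
    (hcov : realize c w ⊆ ⋃ v ∈ V, realize c v)
    {i j k : Fin 3} (hij : i ≠ j) (hik : i ≠ k) (hjk : j ≠ k)
    (hijk : ∀ l : Fin 3, l = i ∨ l = j ∨ l = k)
    (v : Fin 3 → S) (hv : v ∈ V) (hvw : ∀ l, v l ≠ c (w l)) (hvi : v i ≠ w i)
    (u u' : Fin 3 → S) (hu : u ∈ V) (hu' : u' ∈ V)
    (hui : u i = c (v i)) (hui' : u' i = c (v i)) (huj : u' j = c (u j))
    (ujv : u j ≠ c (v j)) (ujw : u j ≠ c (w j))
    (ujv' : u' j ≠ c (v j)) (ujw' : u' j ≠ c (w j)) :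
    FlipTwo c V w v i j k := by
  have huj' : u j = c (u' j) := by rw [huj, hinv]
  have a1 := flip_two c hinv hne hV hT hcov hij hik hjk hijk v hv hvw hvi u u' hu hu' hui hui'
    huj ujv ujw
  have a2 := flip_two c hinv hne hV hT hcov hij hik hjk hijk v hv hvw hvi u' u hu' hu hui' hui
    huj' ujv' ujw'
  have t := twin_ijk c hT (i := j) (j := i) (k := k) (fun l => by have := hijk l; tauto)
    u hu u' hu' huj (hui.trans hui'.symm)
  by_cases h : u k = v k
  · refine ⟨u, hu, u', hu', hui, hui', huj, h, ?_, ujw, ujw', ?_⟩ <;> grind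
  · refine ⟨u', hu', u, hu, hui', hui, huj', ?_, ?_, ujw', ujw, ?_⟩ <;> grind

theorem flip_box (hinv : ∀ s, c (c s) = s) (hne : ∀ s, c s ≠ s)
    {V : Set (Fin 3 → S)} {w : Fin 3 → S} (hV : PolyboxCode c V)
    (hT : ∀ u ∈ V, ∀ v ∈ V, ¬ TwinPair c u v)
    (hcov : realize c w ⊆ ⋃ v ∈ V, realize c v)
    {i j k : Fin 3} (hij : i ≠ j) (hik : i ≠ k) (hjk : j ≠ k)
    (hijk : ∀ l : Fin 3, l = i ∨ l = j ∨ l = k)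
    (v : Fin 3 → S) (hv : v ∈ V) (hvw : ∀ l, v l ≠ c (w l)) (hvi : v i ≠ w i) :
    (∃ u ∈ V, u i = c (v i) ∧ (u j = v j ∨ u j = w j) ∧ (u k = v k ∨ u k = w k)) ∨
    FlipTwo c V w v i j k ∨ FlipTwo c V w v i k j := by
  have hijk' : ∀ l : Fin 3, l = i ∨ l = k ∨ l = j := fun l => by have := hijk l; tauto
  -- two different words at the flipped place suffice
  have two : ∀ u ∈ V, ∀ u' ∈ V, u ≠ u' → u i = c (v i) → u' i = c (v i) →
      u j ≠ c (v j) → u j ≠ c (w j) → u k ≠ c (v k) → u k ≠ c (w k) →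
      u' j ≠ c (v j) → u' j ≠ c (w j) → u' k ≠ c (v k) → u' k ≠ c (w k) →
      FlipTwo c V w v i j k ∨ FlipTwo c V w v i k j := by
    intro u hu u' hu' hn h1 h2 b1 b2 b3 b4 b5 b6 b7 b8
    rcases dich_ijk c hV hijk u hu u' hu' hn with h | h | h
    · exact absurd (h.symm.trans (h2.trans h1.symm)) (hne _)
    · exact Or.inl (flip_two' c hinv hne hV hT hcov hij hik hjk hijk v hv hvw hvi u u' hu hu'
        h1 h2 h b1 b2 b5 b6)
    · exact Or.inr (flip_two' c hinv hne hV hT hcov hik hij hjk.symm hijk' v hv hvw hvi u u' hu hu'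
        h1 h2 h b3 b4 b7 b8)
  have inj : ∀ s t, s ≠ t → c s ≠ c t := fun s t h e => h (by rw [← hinv s, e, hinv])
  obtain ⟨u, hu, h1, ⟨h2, h3, -⟩, h4, h5, -⟩ := flip_cov c hinv hne hV hcov hij hik hjk hijk
    v hv hvw hvi (v j) (v k) (hne _).symm (hvw j) (hne _).symm (hvw k)
  by_cases hj : u j = v j ∨ u j = w j
  · by_cases hk : u k = v k ∨ u k = w k
    · exact Or.inl ⟨u, hu, h1, hj, hk⟩
    · push Not at hk
      obtain ⟨z, hz, z1, ⟨z2, z3, -⟩, z4, z5, z6⟩ := flip_cov c hinv hne hV hcov hij hik hjk hijk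
        v hv hvw hvi (v j) (c (u k)) (hne _).symm (hvw j) (inj _ _ hk.1) (inj _ _ hk.2)
      rw [hinv] at z6
      exact Or.inr (two u hu z hz (by rintro rfl; exact z6 rfl) h1 z1 h2 h3 h4 h5 z2 z3 z4 z5)
  · push Not at hj
    obtain ⟨z, hz, z1, ⟨z2, z3, z6⟩, z4, z5, -⟩ := flip_cov c hinv hne hV hcov hij hik hjk hijk
      v hv hvw hvi (c (u j)) (v k) (inj _ _ hj.1) (inj _ _ hj.2) (hne _).symm (hvw k)
    rw [hinv] at z6
    exact Or.inr (two u hu z hz (by rintro rfl; exact z6 rfl) h1 z1 h2 h3 h4 h5 z2 z3 z4 z5)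

/-- No word differs from `w` in exactly one place. -/
theorem no_one (hinv : ∀ s, c (c s) = s) (hne : ∀ s, c s ≠ s)
    {V : Set (Fin 3 → S)} {w : Fin 3 → S} (hV : PolyboxCode c V)
    (hT : ∀ u ∈ V, ∀ v ∈ V, ¬ TwinPair c u v)
    (hcov : realize c w ⊆ ⋃ v ∈ V, realize c v)
    {i j k : Fin 3} (hij : i ≠ j) (hik : i ≠ k) (hjk : j ≠ k)
    (hijk : ∀ l : Fin 3, l = i ∨ l = j ∨ l = k)
    (v : Fin 3 → S) (hv : v ∈ V) (hvw : ∀ l, v l ≠ c (w l)) (hvi : v i ≠ w i)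
    (hvj : v j = w j) (hvk : v k = w k) : False := by
  rcases flip_box c hinv hne hV hT hcov hij hik hjk hijk v hv hvw hvi with
    ⟨u, hu, h1, h2, h3⟩ | ⟨u, hu, u', hu', h⟩ | ⟨u, hu, u', hu', h⟩
  · exact twin_ijk c hT hijk v hv u hu h1 (by grind) (by grind)
  · exact h.2.2.2.2.2.2.2 hvk
  · exact h.2.2.2.2.2.2.2 hvj

/-- A word differing from `w` in exactly two places determines everything. -/
theorem case_two [Fintype S] (hinv : ∀ s, c (c s) = s) (hne : ∀ s, c s ≠ s)
    {V : Set (Fin 3 → S)} {w : Fin 3 → S} (hV : PolyboxCode c V)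
    (hT : ∀ u ∈ V, ∀ v ∈ V, ¬ TwinPair c u v)
    (hcov : realize c w ⊆ ⋃ v ∈ V, realize c v)
    {i j k : Fin 3} (hij : i ≠ j) (hik : i ≠ k) (hjk : j ≠ k)
    (hijk : ∀ l : Fin 3, l = i ∨ l = j ∨ l = k)
    (v : Fin 3 → S) (hv : v ∈ V) (hvw : ∀ l, v l ≠ c (w l)) (hvi : v i ≠ w i)
    (hvj : v j ≠ w j) (hvk : v k = w k) :
    (∀ v ∈ V, ∀ l, v l ≠ c (w l)) ∧ ∀ l, ∃ v ∈ V, v l = w l := by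
  classical
  have hjik : ∀ l : Fin 3, l = j ∨ l = i ∨ l = k := fun l => by have := hijk l; tauto
  have hvwi := hvw i
  have hvwj := hvw j
  have inj : ∀ s t, s ≠ t → c s ≠ c t := fun s t h e => h (by rw [← hinv s, e, hinv])
  have key1 : ∀ i j : Fin 3, i ≠ j → i ≠ k → j ≠ k → (∀ l : Fin 3, l = i ∨ l = j ∨ l = k) →
      v i ≠ w i → FlipTwo c V w v i k j := by
    intro i j hij hik hjk hijk hvi
    rcases flip_box c hinv hne hV hT hcov hij hik hjk hijk v hv hvw hvi with
      ⟨u, hu, h1, h2, h3⟩ | ⟨u, hu, u', hu', h⟩ | h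
    · exfalso
      have h3' : u k = w k := by grind
      rcases h2 with h2 | h2
      · exact twin_ijk c hT hijk v hv u hu h1 h2.symm (by grind)
      · refine no_one c hinv hne hV hT hcov hij hik hjk hijk u hu (fun l => ?_) ?_ h2 h3'
        · rcases hijk l with rfl | rfl | rfl
          · rw [h1]; exact inj _ _ hvi
          · rw [h2]; exact (hne _).symm
          · rw [h3']; exact (hne _).symm
        · rw [h1]; exact (c_ne c hinv (hvw i)).symm
    · exact absurd hvk h.2.2.2.2.2.2.2
    · exact h
  obtain ⟨p, hp, p', hp', p1, p2, p3, p4, p5, p6, p7, -⟩ := key1 i j hij hik hjk hijk hvi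
  obtain ⟨q, hq, q', hq', q1, q2, q3, q4, q5, q6, q7, -⟩ :=
    key1 j i hij.symm hjk hik hjik hvj
  have n1 := hne (v i)
  have n2 := hne (v j)
  have n3 := c_ne c hinv (hvw i)
  have n4 := c_ne c hinv (hvw j)
  have n5 := hne (p k)
  have n6 := hne (q k)
  have e1 : v ≠ p := by rintro rfl; grind
  have e2 : v ≠ p' := by rintro rfl; grind
  have e3 : v ≠ q := by rintro rfl; grind
  have e4 : v ≠ q' := by rintro rfl; grind
  have e5 : p ≠ p' := by rintro rfl; grind
  have e6 : p ≠ q := by rintro rfl; grind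
  have e7 : p ≠ q' := by rintro rfl; grind
  have e8 : p' ≠ q := by rintro rfl; grind
  have e9 : p' ≠ q' := by rintro rfl; grind
  have e10 : q ≠ q' := by rintro rfl; grind
  have hVeq : ({v, p, p', q, q'} : Finset (Fin 3 → S)) = V.toFinset := by
    apply Finset.eq_of_subset_of_card_le
    · intro x hx
      simp only [Finset.mem_insert, Finset.mem_singleton] at hx
      rw [Set.mem_toFinset]
      rcases hx with rfl | rfl | rfl | rfl | rfl <;> assumption
    · rw [← Set.ncard_eq_toFinset_card']
      have : ({v, p, p', q, q'} : Finset (Fin 3 → S)).card = 5 := by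
        rw [Finset.card_insert_of_notMem, Finset.card_insert_of_notMem,
          Finset.card_insert_of_notMem, Finset.card_insert_of_notMem, Finset.card_singleton]
        all_goals simp_all
      rw [this]
      exact no_six c hinv hne hV hT
  constructor
  · intro x hx l
    rw [← Set.mem_toFinset, ← hVeq] at hx
    simp only [Finset.mem_insert, Finset.mem_singleton] at hx
    have i1 := inj _ _ hvi
    have i2 := inj _ _ hvj
    have m1 := hne (w i)
    have m2 := hne (w j)
    rcases hx with rfl | rfl | rfl | rfl | rfl
    · exact hvw l
    all_goals rcases hijk l with rfl | rfl | rfl <;> grind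
  · intro l
    rcases hijk l with rfl | rfl | rfl
    · exact ⟨q', hq', q5⟩
    · exact ⟨p', hp', p5⟩
    · exact ⟨v, hv, hvk⟩

theorem cover_structure [Fintype S] (hinv : ∀ s, c (c s) = s) (hne : ∀ s, c s ≠ s)
    {V : Set (Fin 3 → S)} {w : Fin 3 → S} (hV : PolyboxCode c V)
    (hT : ∀ u ∈ V, ∀ v ∈ V, ¬ TwinPair c u v)
    (hcov : realize c w ⊆ ⋃ v ∈ V, realize c v) (hw : w ∉ V) :
    (∀ v ∈ V, ∀ l, v l ≠ c (w l)) ∧ ∀ l, ∃ v ∈ V, v l = w l := by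
  have star : ∀ i j k : Fin 3, i ≠ j → i ≠ k → j ≠ k → (∀ l : Fin 3, l = i ∨ l = j ∨ l = k) →
      ∀ v ∈ V, (∀ l, v l ≠ c (w l)) → v k = w k →
      (∀ v ∈ V, ∀ l, v l ≠ c (w l)) ∧ ∀ l, ∃ v ∈ V, v l = w l := by
    intro i j k hij hik hjk hijk v hv hvw hvk
    have hjik : ∀ l : Fin 3, l = j ∨ l = i ∨ l = k := fun l => by have := hijk l; tauto
    by_cases hi : v i = w i
    · by_cases hj : v j = w j
      · refine absurd ?_ hw
        have : v = w := by
          funext l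
          rcases hijk l with rfl | rfl | rfl <;> assumption
        exact this ▸ hv
      · exact (no_one c hinv hne hV hT hcov hij.symm hjk hik hjik v hv hvw hj hi hvk).elim
    · by_cases hj : v j = w j
      · exact (no_one c hinv hne hV hT hcov hij hik hjk hijk v hv hvw hi hj hvk).elim
      · exact case_two c hinv hne hV hT hcov hij hik hjk hijk v hv hvw hi hj hvk
  have h012 : ∀ l : Fin 3, l = 0 ∨ l = 1 ∨ l = 2 := by decide
  have s0 := star 1 2 0 (by decide) (by decide) (by decide) (by decide)
  have s1 := star 0 2 1 (by decide) (by decide) (by decide) (by decide)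
  have s2 := star 0 1 2 (by decide) (by decide) (by decide) (by decide)
  have hs : ∀ a : S, ∀ x ∈ ({a} : Set S), c x ∉ ({a} : Set S) := by
    intro a x hx
    rw [Set.mem_singleton_iff] at hx ⊢
    rw [hx]
    exact hne a
  obtain ⟨v, hv, v0, v1, v2⟩ := cover_letters c hinv hne hcov (i := 0) (j := 1) (k := 2)
    (by decide) (by decide) (by decide) h012 {w 0} {w 1} {w 2} rfl rfl rfl (hs _) (hs _) (hs _)
  have hvw : ∀ l, v l ≠ c (w l) := by
    intro l
    rcases h012 l with rfl | rfl | rfl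
    · exact v0 _ rfl
    · exact v1 _ rfl
    · exact v2 _ rfl
  by_cases h0 : v 0 = w 0
  · exact s0 v hv hvw h0
  by_cases h1 : v 1 = w 1
  · exact s1 v hv hvw h1
  by_cases h2 : v 2 = w 2
  · exact s2 v hv hvw h2
  have inj : ∀ s t, s ≠ t → c s ≠ c t := fun s t h e => h (by rw [← hinv s, e, hinv])
  rcases flip_box c hinv hne hV hT hcov (by decide) (by decide) (by decide) h012 v hv hvw h0 with
    ⟨u, hu, u0, u1, u2⟩ | ⟨u, hu, u', hu', u0, u0', u1, u2, u2', u3, u3', -⟩ |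
    ⟨u, hu, u', hu', u0, u0', u1, u2, u2', u3, u3', -⟩
  · have huw : ∀ l, u l ≠ c (w l) := by
      intro l
      have := inj _ _ h0
      have := hne (w 1)
      have := hne (w 2)
      have := hvw 1
      have := hvw 2
      rcases h012 l with rfl | rfl | rfl <;> grind
    rcases u1 with u1 | u1
    · rcases u2 with u2 | u2
      · exact (twin_ijk c hT h012 v hv u hu u0 u1.symm u2.symm).elim
      · exact s2 u hu huw u2
    · exact s1 u hu huw u1
  · refine s2 u' hu' (fun l => ?_) u2'
    have := inj _ _ h0
    have := hne (w 2)
    rcases h012 l with rfl | rfl | rfl <;> grind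
  · refine s1 u' hu' (fun l => ?_) u2'
    have := inj _ _ h0
    have := hne (w 1)
    rcases h012 l with rfl | rfl | rfl <;> grind

/-- A point of the realization of `v` avoiding a given different word. -/
theorem exists_mem_realize (hinv : ∀ s, c (c s) = s) (hne : ∀ s, c s ≠ s) {d : ℕ}
    (v w : Fin d → S) : ∃ B ∈ realize c v, B ∈ realize c w → v = w := by
  classical
  have h : ∀ l, ∃ B ∈ ESet c, v l ∈ B ∧ (w l ∈ B → v l = w l) := by
    intro l
    by_cases hl : v l = w l
    · obtain ⟨B, hB, h⟩ := exists_ESet_extend c hinv hne {v l} (by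
        intro x hx
        rw [Set.mem_singleton_iff] at hx ⊢
        rw [hx]
        exact hne _)
      exact ⟨B, hB, h rfl, fun _ => hl⟩
    · have hvw : c (w l) ≠ c (v l) := fun e => hl (by rw [← hinv (v l), ← e, hinv])
      obtain ⟨B, hB, h⟩ := exists_ESet_extend c hinv hne {v l, c (w l), c (w l)}
        (nc_three c hinv hne _ _ _ hvw hvw (Ne.symm (hne _)))
      refine ⟨B, hB, h (by simp), fun hw => ?_⟩
      exact absurd (h (show c (w l) ∈ _ by simp)) ((hB _).1 hw)
  choose B hB hv hw using h
  exact ⟨B, fun l => ⟨hB l, hv l⟩, fun h => funext fun l => hw l (h l).2⟩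

theorem realize_disjoint {d : ℕ} {v w : Fin d → S} (h : Dichotomous c v w)
    {B : Fin d → Set S} (hv : B ∈ realize c v) (hw : B ∈ realize c w) : False := by
  obtain ⟨j, hj⟩ := h
  have h1 := hv j
  have h2 := hw j
  rw [hj] at h2
  exact (h1.1 _).1 h1.2 h2.2

theorem rigid_three [Fintype S] (hinv : ∀ s, c (c s) = s) (hne : ∀ s, c s ≠ s)
    {V : Set (Fin 3 → S)} (hV : PolyboxCode c V)
    (hT : ∀ u ∈ V, ∀ v ∈ V, ¬ TwinPair c u v) : Rigid c V := by
  intro W hW hE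
  unfold Equivalent at hE
  have hcov : ∀ w ∈ W, realize c w ⊆ ⋃ v ∈ V, realize c v := by
    intro w hw
    rw [hE]
    exact Set.subset_biUnion_of_mem hw
  have hWV : W ⊆ V := by
    intro w hw
    by_contra hwV
    obtain ⟨a1, a2⟩ := cover_structure c hinv hne hV hT (hcov w hw) hwV
    have huniq : ∀ x ∈ W, x = w := by
      intro x hx
      by_contra hxw
      obtain ⟨l, hl⟩ := hW w hw x hx (Ne.symm hxw)
      by_cases hxV : x ∈ V
      · exact a1 x hxV l hl
      · obtain ⟨v, hv, hvl⟩ := a2 l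
        refine (cover_structure c hinv hne hV hT (hcov x hx) hxV).1 v hv l ?_
        rw [hvl, hl, hinv]
    obtain ⟨v, hv, -⟩ := a2 0
    obtain ⟨B, hB, hBw⟩ := exists_mem_realize c hinv hne v w
    have : B ∈ ⋃ w ∈ W, realize c w := by
      rw [← hE]
      exact Set.mem_biUnion hv hB
    obtain ⟨x, hx, hBx⟩ := Set.mem_iUnion₂.1 this
    rw [huniq x hx] at hBx
    exact hwV (hBw hBx ▸ hv)
  refine Set.Subset.antisymm hWV fun v hv => ?_
  obtain ⟨B, hB, -⟩ := exists_mem_realize c hinv hne v v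
  have : B ∈ ⋃ w ∈ W, realize c w := by
    rw [← hE]
    exact Set.mem_biUnion hv hB
  obtain ⟨x, hx, hBx⟩ := Set.mem_iUnion₂.1 this
  by_cases hxv : x = v
  · exact hxv ▸ hx
  · exact (realize_disjoint c (hV x (hWV hx) v hv hxv) hBx hB).elim

/-- Padding of words by a fixed letter. -/
def padWord {d : ℕ} (s : S) (v : Fin d → S) : Fin 3 → S :=
  fun l => if h : l.1 < d then v ⟨l.1, h⟩ else s

theorem padWord_cast {d : ℕ} (hd : d ≤ 3) (s : S) (v : Fin d → S) (l : Fin d) :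
    padWord s v (Fin.castLE hd l) = v l := by
  simp [padWord]

theorem padWord_inj {d : ℕ} (hd : d ≤ 3) (s : S) :
    Function.Injective (padWord (d := d) s) := by
  intro u v h
  funext l
  rw [← padWord_cast hd s u l, h, padWord_cast hd s v l]

theorem padWord_dich (hne : ∀ s, c s ≠ s) {d : ℕ} (s : S) (u v : Fin d → S)
    (l : Fin 3) (h : padWord s v l = c (padWord s u l)) :
    ∃ hl : l.1 < d, v ⟨l.1, hl⟩ = c (u ⟨l.1, hl⟩) := by
  by_cases hl : l.1 < d
  · refine ⟨hl, ?_⟩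
    simpa [padWord, hl] using h
  · simp only [padWord, hl, dite_false] at h
    exact absurd h.symm (hne s)

theorem pad_code {d : ℕ} (hd : d ≤ 3) (s : S) {V : Set (Fin d → S)} (hV : PolyboxCode c V) :
    PolyboxCode c (Set.image (padWord s) V) := by
  rintro _ ⟨u, hu, rfl⟩ _ ⟨v, hv, rfl⟩ h
  obtain ⟨j, hj⟩ := hV u hu v hv (fun e => h (by rw [e]))
  exact ⟨Fin.castLE hd j, by rw [padWord_cast, padWord_cast, hj]⟩

theorem pad_twin (hne : ∀ s, c s ≠ s) {d : ℕ} (hd : d ≤ 3) (s : S) {V : Set (Fin d → S)}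
    (hT : ∀ u ∈ V, ∀ v ∈ V, ¬ TwinPair c u v) :
    ∀ u ∈ Set.image (padWord s) V, ∀ v ∈ Set.image (padWord s) V, ¬ TwinPair c u v := by
  rintro _ ⟨u, hu, rfl⟩ _ ⟨v, hv, rfl⟩ ⟨l, h1, h2⟩
  obtain ⟨hl, h⟩ := padWord_dich c hne s u v l h1
  refine hT u hu v hv ⟨⟨l.1, hl⟩, h, fun i hi => ?_⟩
  have := h2 (Fin.castLE hd i) (fun e => hi (by subst e; rfl))
  rwa [padWord_cast, padWord_cast] at this

theorem pad_union {d : ℕ} (hd : d ≤ 3) (s : S) (V : Set (Fin d → S)) (B : Fin 3 → Set S) :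
    (B ∈ ⋃ v ∈ Set.image (padWord s) V, realize c v) ↔
      ((fun l => B (Fin.castLE hd l)) ∈ ⋃ v ∈ V, realize c v) ∧
        ∀ l : Fin 3, ¬ l.1 < d → B l ∈ Eltr c s := by
  constructor
  · intro h
    obtain ⟨_, ⟨v, hv, rfl⟩, hB⟩ := Set.mem_iUnion₂.1 h
    refine ⟨Set.mem_biUnion hv fun l => ?_, fun l hl => ?_⟩
    · have := hB (Fin.castLE hd l)
      rwa [padWord_cast] at this
    · have := hB l
      simpa only [padWord, hl, dite_false] using this
  · rintro ⟨h, h'⟩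
    obtain ⟨v, hv, hB⟩ := Set.mem_iUnion₂.1 h
    refine Set.mem_biUnion (Set.mem_image_of_mem _ hv) fun l => ?_
    by_cases hl : l.1 < d
    · have := hB ⟨l.1, hl⟩
      simp only [padWord, hl, dite_true]
      exact this
    · simp only [padWord, hl, dite_false]
      exact h' l hl

theorem pad_equiv {d : ℕ} (hd : d ≤ 3) (s : S) {V W : Set (Fin d → S)}
    (h : Equivalent c V W) : Equivalent c (Set.image (padWord s) V) (Set.image (padWord s) W) := by
  unfold Equivalent at *
  ext B
  rw [pad_union c hd, pad_union c hd, h]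

end

/-- For `d ≤ 3`, every polybox code `V ⊆ S^d` without twin pairs is rigid and
has at most 5 words. -/
theorem rigid_of_dim_le_three {S : Type*} [Fintype S] (c : S → S)
    (hinv : ∀ s, c (c s) = s) (hne : ∀ s, c s ≠ s) {d : ℕ} (hd : d ≤ 3)
    (V : Set (Fin d → S)) (hV : PolyboxCode c V)
    (hVtf : ∀ u ∈ V, ∀ v ∈ V, ¬ TwinPair c u v) :
    Rigid c V ∧ V.ncard ≤ 5 := by
  rcases Nat.eq_zero_or_pos d with rfl | hpos
  · have hsub : ∀ u v : Fin 0 → S, u = v := fun u v => funext fun l => l.elim0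
    constructor
    · intro W hW hE
      unfold Equivalent at hE
      ext x
      have key : ∀ U : Set (Fin 0 → S), x ∈ U ↔
          (fun l => l.elim0 : Fin 0 → Set S) ∈ ⋃ v ∈ U, realize c v := by
        intro U
        constructor
        · intro h
          exact Set.mem_biUnion h fun l => l.elim0
        · intro h
          obtain ⟨y, hy, -⟩ := Set.mem_iUnion₂.1 h
          exact hsub y x ▸ hy
      rw [key W, key V, hE]
    · have : V.Subsingleton := fun u _ v _ => hsub u v
      have := Set.ncard_le_one_iff_subsingleton.2 this
      omega
  · rcases isEmpty_or_nonempty S with hS | ⟨⟨s⟩⟩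
    · have hem : ∀ U : Set (Fin d → S), U = ∅ := fun U =>
        Set.eq_empty_of_forall_notMem fun u _ => hS.elim (u ⟨0, hpos⟩)
      refine ⟨fun W _ _ => by rw [hem W, hem V], ?_⟩
      rw [hem V, Set.ncard_empty]
      omega
    · have h1 := pad_code c hd s hV
      have h2 := pad_twin c hne hd s hVtf
      constructor
      · intro W hW hE
        exact (padWord_inj hd s).image_injective
          (rigid_three c hinv hne h1 h2 _ (pad_code c hd s hW) (pad_equiv c hd s hE))
      · rw [← Set.ncard_image_of_injective V (padWord_inj hd s)]
        exact no_six c hinv hne h1 h2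
end

section
/- Let S = {a, a', b, b'} be an alphabet with complementation consisting of exactly four letters (with a'' = a, b'' = b). Every polybox code V ⊆ S^d without twin pairs satisfying |V| ≤ 7 is rigid. -/
/-! ### Twin-free partitions of discrete cubes into subcubes -/

section Cubes

set_option linter.unusedSectionVars false

variable {ι : Type*} [Fintype ι] [DecidableEq ι]

/-- membership of a point in a subcube -/
def InCube (x : ι → Bool) (u : ι → Option Bool) : Prop :=
  ∀ i b, u i = some b → x i = b

/-- `P` is a partition of `q` into subcubes. -/
def IsPart (P : Finset (ι → Option Bool)) (q : ι → Option Bool) : Prop :=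
  (∀ p ∈ P, ∀ x, InCube x p → InCube x q) ∧
  (∀ x, InCube x q → ∃ p ∈ P, InCube x p) ∧
  (∀ p ∈ P, ∀ p' ∈ P, ∀ x, InCube x p → InCube x p' → p = p')

/-- no two subcubes of `P` form a twin pair -/
def CubeTwinFree (P : Finset (ι → Option Bool)) : Prop :=
  ∀ p ∈ P, ∀ i b, p i = some b → Function.update p i (some (!b)) ∉ P

theorem inCube_witness (u : ι → Option Bool) (f : ι → Bool) :
    InCube (fun i => (u i).getD (f i)) u := by
  intro i b h
  simp [h]

theorem cube_ext {u v : ι → Option Bool}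
    (h : ∀ x, InCube x u ↔ InCube x v) : u = v := by
  have key : ∀ u v : ι → Option Bool, (∀ x, InCube x u → InCube x v) →
      ∀ i b, v i = some b → u i = some b := by
    intro u v h i b hb
    have h1 := h _ (inCube_witness u (fun _ => !b)) i b hb
    cases hu : u i with
    | none => simp [hu] at h1
    | some a => simpa [hu] using h1
  funext i
  cases hu : u i with
  | none =>
    cases hv : v i with
    | none => rfl
    | some b =>
      have := key u v (fun x => (h x).1) i b hv
      simp [hu] at this
  | some b => exact (key v u (fun x => (h x).2) i b hu).symm

theorem inCube_update_none {x : ι → Bool} {u : ι → Option Bool} {i : ι} {b : Bool}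
    (hu : u i = none) : InCube (Function.update x i b) u ↔ InCube x u := by
  constructor
  · intro h j c hj
    have hji : j ≠ i := by rintro rfl; simp [hu] at hj
    have := h j c hj
    simpa [hji] using this
  · intro h j c hj
    have hji : j ≠ i := by rintro rfl; simp [hu] at hj
    have := h j c hj
    simpa [hji] using this

theorem inCube_update {x : ι → Bool} {u : ι → Option Bool} {i : ι} {b c : Bool}
    (hu : u i = some b) :
    InCube x (Function.update u i (some c)) ↔
      x i = c ∧ InCube (Function.update x i b) u := by
  constructor
  · intro h
    refine ⟨h i c (by simp), ?_⟩
    intro j e hj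
    by_cases hji : j = i
    · subst hji
      rw [hu] at hj
      simpa using hj
    · have := h j e (by simpa [hji] using hj)
      simpa [hji] using this
  · rintro ⟨h1, h2⟩ j e hj
    by_cases hji : j = i
    · subst hji
      simp at hj
      rw [h1, hj]
    · have := h2 j e (by simpa [hji] using hj)
      simpa [hji] using this

/-- In a partition, a piece fixed at `i` forces pieces on the other side. -/
theorem part_cross {P : Finset (ι → Option Bool)} {q : ι → Option Bool}
    (hP : IsPart P q) {i : ι} (hq : q i = none) {b : Bool} {p : ι → Option Bool}
    (hp : p ∈ P) (hpi : p i = some b) {x : ι → Bool} (hx : InCube x p) :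
    ∃ p' ∈ P, p' i = some (!b) ∧ InCube (Function.update x i (!b)) p' := by
  obtain ⟨h1, h2, h3⟩ := hP
  obtain ⟨p', hp', hx'⟩ := h2 (Function.update x i (!b))
    ((inCube_update_none hq).2 (h1 p hp x hx))
  refine ⟨p', hp', ?_, hx'⟩
  cases hpi' : p' i with
  | none =>
    have : InCube x p' := (inCube_update_none hpi').1 hx'
    have := h3 p hp p' hp' x hx this
    rw [this, hpi'] at hpi
    simp at hpi
  | some e =>
    have := hx' i e hpi'
    simp at this
    rw [this, Bool.not_not]

theorem part_flip {P : Finset (ι → Option Bool)} {q : ι → Option Bool}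
    (hP : IsPart P q) {i : ι} (hq : q i = none) {b : Bool} {p : ι → Option Bool}
    (hs : P.filter (fun p => p i = some b) = {p}) :
    IsPart (P.filter (fun p => p i = some (!b))) (Function.update p i (some (!b))) := by
  have hp : p ∈ P.filter (fun p => p i = some b) := by rw [hs]; simp
  rw [Finset.mem_filter] at hp
  obtain ⟨hpP, hpi⟩ := hp
  refine ⟨?_, ?_, ?_⟩
  · intro r hr x hx
    rw [Finset.mem_filter] at hr
    obtain ⟨p', hp', hpi', hx'⟩ := part_cross hP hq hr.1 hr.2 hx
    rw [Bool.not_not] at hpi' hx'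
    have : p' ∈ P.filter (fun p => p i = some b) := by
      rw [Finset.mem_filter]; exact ⟨hp', hpi'⟩
    rw [hs, Finset.mem_singleton] at this
    subst this
    exact (inCube_update hpi).2 ⟨hx i _ hr.2, hx'⟩
  · intro x hx
    obtain ⟨hxi, hx⟩ := (inCube_update hpi).1 hx
    obtain ⟨p', hp', hpi', hx'⟩ := part_cross hP hq hpP hpi hx
    refine ⟨p', ?_, ?_⟩
    · rw [Finset.mem_filter]; exact ⟨hp', hpi'⟩
    · have e : Function.update (Function.update x i b) i (!b) = x := by
        rw [Function.update_idem, ← hxi, Function.update_eq_self]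
      rwa [e] at hx'
  · intro r hr r' hr'
    exact hP.2.2 r (Finset.mem_filter.1 hr).1 r' (Finset.mem_filter.1 hr').1

theorem cubeTwinFree_mono {P R : Finset (ι → Option Bool)} (h : R ⊆ P)
    (hP : CubeTwinFree P) : CubeTwinFree R :=
  fun p hp i b hb hm => hP p (h hp) i b hb (h hm)

theorem part_single {p q : ι → Option Bool} (h : IsPart {p} q) : p = q := by
  apply cube_ext
  intro x
  refine ⟨h.1 p (by simp) x, fun hx => ?_⟩
  obtain ⟨p', hp', hx'⟩ := h.2.1 x hx
  rw [Finset.mem_singleton] at hp'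
  rwa [hp'] at hx'

theorem part_active {P : Finset (ι → Option Bool)} {q : ι → Option Bool}
    (hP : IsPart P q) (ht : CubeTwinFree P)
    (ih : ∀ R : Finset (ι → Option Bool), R ⊂ P → ∀ r, IsPart R r →
      2 ≤ R.card → 5 ≤ R.card)
    {i : ι} (hq : q i = none) (b : Bool)
    (hne : (P.filter (fun p => p i = some b)).Nonempty) :
    2 ≤ (P.filter (fun p => p i = some b)).card ∨
      5 ≤ (P.filter (fun p => p i = some (!b))).card := by
  by_contra hcon
  rw [not_or] at hcon
  obtain ⟨hc1, hc2⟩ := hcon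
  have hc0 := hne.card_pos
  obtain ⟨p, hs⟩ := Finset.card_eq_one.1 (show (P.filter (fun p => p i = some b)).card = 1 by omega)
  have hpart := part_flip hP hq hs
  have hp : p ∈ P.filter (fun p => p i = some b) := by rw [hs]; simp
  rw [Finset.mem_filter] at hp
  have hss : P.filter (fun p => p i = some (!b)) ⊂ P := by
    rw [Finset.ssubset_iff_of_subset (Finset.filter_subset _ _)]
    refine ⟨p, hp.1, ?_⟩
    rw [Finset.mem_filter, hp.2]
    simp
  have h5 := ih _ hss _ hpart
  obtain ⟨p', hp', hpi', -⟩ := part_cross hP hq hp.1 hp.2 (inCube_witness p (fun _ => true))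
  have hpos : 0 < (P.filter (fun p => p i = some (!b))).card :=
    Finset.card_pos.2 ⟨p', Finset.mem_filter.2 ⟨hp', hpi'⟩⟩
  obtain ⟨r, hr⟩ := Finset.card_eq_one.1
    (show (P.filter (fun p => p i = some (!b))).card = 1 by omega)
  rw [hr] at hpart
  have hrr : r ∈ P.filter (fun p => p i = some (!b)) := by rw [hr]; simp
  have := part_single hpart
  rw [this] at hrr
  exact ht p hp.1 i b hp.2 (Finset.mem_filter.1 hrr).1

theorem part_other {P : Finset (ι → Option Bool)} {q : ι → Option Bool}
    (hP : IsPart P q) {i : ι} (hq : q i = none) (b : Bool)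
    (hne : (P.filter (fun p => p i = some b)).Nonempty) :
    (P.filter (fun p => p i = some (!b))).Nonempty := by
  obtain ⟨p, hp⟩ := hne
  rw [Finset.mem_filter] at hp
  obtain ⟨p', hp', hpi', -⟩ := part_cross hP hq hp.1 hp.2 (inCube_witness p (fun _ => true))
  exact ⟨p', Finset.mem_filter.2 ⟨hp', hpi'⟩⟩

theorem part_five (P : Finset (ι → Option Bool)) (ht : CubeTwinFree P) :
    ∀ q, IsPart P q → 2 ≤ P.card → 5 ≤ P.card := by
  induction P using Finset.strongInduction with
  | H P IH =>
  intro q hP h2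
  have ih : ∀ R : Finset (ι → Option Bool), R ⊂ P → ∀ r, IsPart R r →
      2 ≤ R.card → 5 ≤ R.card :=
    fun R hR => IH R hR (cubeTwinFree_mono hR.1 ht)
  -- an active coordinate
  have hact : ∃ p ∈ P, ∃ i b, q i = none ∧ p i = some b := by
    by_contra hcon
    push Not at hcon
    have hall : ∀ p ∈ P, p = q := by
      intro p hp
      apply cube_ext
      intro x
      refine ⟨hP.1 p hp x, fun hx i b hb => ?_⟩
      cases hqi : q i with
      | none => exact absurd hb (hcon p hp i b hqi)
      | some e =>
        have h1 := hP.1 p hp _ (inCube_witness p x) i e hqi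
        simp [hb] at h1
        rw [h1]; exact hx i e hqi
    have : P.card ≤ 1 := Finset.card_le_one.2 fun a ha b hb => by
      rw [hall a ha, hall b hb]
    omega
  obtain ⟨p, hp, i, b, hqi, hpi⟩ := hact
  have hn0 : (P.filter (fun p => p i = some b)).Nonempty := ⟨p, Finset.mem_filter.2 ⟨hp, hpi⟩⟩
  have hn1 := part_other hP hqi b hn0
  have a0 := part_active hP ht ih hqi b hn0
  have a1 := part_active hP ht ih hqi (!b) hn1
  rw [Bool.not_not] at a1
  have hdisj : Disjoint (P.filter (fun p => p i = some b))
      (P.filter (fun p => p i = some (!b))) := by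
    rw [Finset.disjoint_filter]
    intro r _ h1 h2
    rw [h1] at h2
    simp at h2
  have hsub : P.filter (fun p => p i = some b) ∪ P.filter (fun p => p i = some (!b)) ⊆ P :=
    Finset.union_subset (Finset.filter_subset _ _) (Finset.filter_subset _ _)
  have hle := Finset.card_le_card hsub
  rw [Finset.card_union_of_disjoint hdisj] at hle
  by_contra hlt
  have heq : P.filter (fun p => p i = some b) ∪ P.filter (fun p => p i = some (!b)) = P := by
    apply Finset.eq_of_subset_of_card_le hsub
    rw [Finset.card_union_of_disjoint hdisj]
    omega
  -- no stars: one side is partitioned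
  have hpart : IsPart (P.filter (fun p => p i = some b)) (Function.update q i (some b)) := by
    refine ⟨?_, ?_, ?_⟩
    · intro r hr x hx
      rw [Finset.mem_filter] at hr
      have hxq := hP.1 r hr.1 x hx
      intro j e hj
      by_cases hji : j = i
      · subst hji
        simp at hj
        rw [← hj]; exact hx _ _ hr.2
      · exact hxq j e (by simpa [hji] using hj)
    · intro x hx
      have hxq : InCube x q := by
        intro j e hj
        have hji : j ≠ i := by rintro rfl; simp [hqi] at hj
        exact hx j e (by simpa [hji] using hj)
      obtain ⟨r, hr, hxr⟩ := hP.2.1 x hxq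
      refine ⟨r, ?_, hxr⟩
      rw [← heq, Finset.mem_union] at hr
      rcases hr with hr | hr
      · exact hr
      · have h1 := hxr i _ (Finset.mem_filter.1 hr).2
        have h2 := hx i b (by simp)
        rw [h1] at h2
        simp at h2
    · intro r hr r' hr'
      exact hP.2.2 r (Finset.mem_filter.1 hr).1 r' (Finset.mem_filter.1 hr').1
  have hss : P.filter (fun p => p i = some b) ⊂ P := by
    refine ⟨Finset.filter_subset _ _, fun h => ?_⟩
    have := Finset.card_le_card h
    have := hn1.card_pos
    omega
  have := ih _ hss _ hpart
  omega

end Cubes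

/-! ### Words -/

section Words

variable {S : Type*} {c : S → S}

/-- slice of a code at the first coordinate -/
def slc {d : ℕ} (V : Set (Fin (d + 1) → S)) (s : S) : Set (Fin d → S) :=
  {u | (Fin.cons s u : Fin (d + 1) → S) ∈ V}

theorem realize_uniq {d : ℕ} {V : Set (Fin d → S)} (hV : PolyboxCode c V)
    {u v : Fin d → S} (hu : u ∈ V) (hv : v ∈ V) {B : Fin d → Set S}
    (hBu : B ∈ realize c u) (hBv : B ∈ realize c v) : u = v := by
  by_contra hne
  obtain ⟨j, hj⟩ := hV u hu v hv hne
  have h1 := hBu j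
  have h2 := (hBv j).2
  rw [hj] at h2
  exact (h1.1 (u j)).1 h1.2 h2

theorem equiv_iff {d : ℕ} {V W : Set (Fin d → S)} :
    Equivalent c V W ↔
      ∀ B, (∃ v ∈ V, B ∈ realize c v) ↔ (∃ w ∈ W, B ∈ realize c w) := by
  unfold Equivalent
  rw [Set.ext_iff]
  simp only [Set.mem_iUnion, exists_prop]

theorem pair_mem_ESet (hinv : ∀ s, c (c s) = s) (hne : ∀ s, c s ≠ s)
    (hall : ∀ s t : S, t ≠ s → t ≠ c s → ∀ r, r = s ∨ r = c s ∨ r = t ∨ r = c t)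
    {l m : S} (h1 : m ≠ l) (h2 : m ≠ c l) : ({l, m} : Set S) ∈ ESet c := by
  have h3 : c m ≠ l := fun h => h2 (by rw [← h, hinv])
  have h4 : c m ≠ c l := fun h => h1 (by rw [← hinv m, h, hinv])
  intro r
  simp only [Set.mem_insert_iff, Set.mem_singleton_iff]
  rcases hall l m h1 h2 r with rfl | rfl | rfl | rfl
  · simp [hne, h2.symm]
  · simp [hinv, hne, h2.symm]
  · simp [hne, h3]
  · simp [hinv, h3, hne]

theorem slice_equiv (hinv : ∀ s, c (c s) = s) (hne : ∀ s, c s ≠ s)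
    (hall : ∀ s t : S, t ≠ s → t ≠ c s → ∀ r, r = s ∨ r = c s ∨ r = t ∨ r = c t)
    {d : ℕ} {V W : Set (Fin (d + 1) → S)} (h : Equivalent c V W)
    {l m : S} (h1 : m ≠ l) (h2 : m ≠ c l) :
    Equivalent c (slc V l ∪ slc V m) (slc W l ∪ slc W m) := by
  have hE := pair_mem_ESet hinv hne hall h1 h2
  have key : ∀ (V : Set (Fin (d + 1) → S)) (B : Fin d → Set S),
      (∃ v ∈ slc V l ∪ slc V m, B ∈ realize c v) ↔
      ∃ v ∈ V, (Fin.cons ({l, m} : Set S) B : Fin (d + 1) → Set S) ∈ realize c v := by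
    intro V B
    constructor
    · rintro ⟨v, hv | hv, hB⟩
      · refine ⟨_, hv, fun i => ?_⟩
        refine Fin.cases ?_ (fun j => ?_) i
        · exact ⟨hE, by simp⟩
        · simpa using hB j
      · refine ⟨_, hv, fun i => ?_⟩
        refine Fin.cases ?_ (fun j => ?_) i
        · exact ⟨hE, by simp⟩
        · simpa using hB j
    · rintro ⟨v, hv, hB⟩
      refine ⟨Fin.tail v, ?_, fun j => by simpa [Fin.tail] using hB j.succ⟩
      have h0 := (hB 0).2
      simp only [Fin.cons_zero, Set.mem_insert_iff, Set.mem_singleton_iff] at h0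
      rcases h0 with h0 | h0
      · left
        show Fin.cons l (Fin.tail v) ∈ V
        rw [← h0, Fin.cons_self_tail]; exact hv
      · right
        show Fin.cons m (Fin.tail v) ∈ V
        rw [← h0, Fin.cons_self_tail]; exact hv
  rw [equiv_iff] at h ⊢
  intro B
  rw [key, key]
  exact h _

theorem slice_code (hne : ∀ s, c s ≠ s) {d : ℕ} {V : Set (Fin (d + 1) → S)}
    (hV : PolyboxCode c V) {l m : S} (h2 : m ≠ c l) (h3 : l ≠ c m) :
    PolyboxCode c (slc V l ∪ slc V m) := by
  have key : ∀ s t : S, t ≠ c s → ∀ u v : Fin d → S, u ∈ slc V s → v ∈ slc V t → u ≠ v →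
      Dichotomous c u v := by
    intro s t hst u v hu hv huv
    obtain ⟨j, hj⟩ := hV _ hu _ hv (fun h => huv (by
      have := congrArg Fin.tail h
      simpa using this))
    revert hj
    refine Fin.cases (fun hj => ?_) (fun j hj => ?_) j
    · exact absurd (by simpa using hj) hst
    · exact ⟨j, by simpa using hj⟩
  rintro u (hu | hu) v (hv | hv) huv
  · exact key l l (hne l).symm u v hu hv huv
  · exact key l m h2 u v hu hv huv
  · exact key m l h3 u v hu hv huv
  · exact key m m (hne m).symm u v hu hv huv

theorem slice_code1 (hne : ∀ s, c s ≠ s) {d : ℕ} {V : Set (Fin (d + 1) → S)}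
    (hV : PolyboxCode c V) (l : S) : PolyboxCode c (slc V l) := by
  have := slice_code hne hV (hne l).symm (hne l).symm
  rwa [Set.union_self] at this

theorem slice_twinfree {d : ℕ} {V : Set (Fin (d + 1) → S)}
    (hV : ∀ u ∈ V, ∀ v ∈ V, ¬ TwinPair c u v) (l : S) :
    ∀ u ∈ slc V l, ∀ v ∈ slc V l, ¬ TwinPair c u v := by
  rintro u hu v hv ⟨j, hj, hij⟩
  refine hV _ hu _ hv ⟨j.succ, by simpa using hj, fun i => ?_⟩
  refine Fin.cases (fun _ => by simp) (fun i hi => ?_) i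
  simpa using hij i (fun h => hi (by rw [h]))

theorem slice_ncard [Finite S] {d : ℕ} (V : Set (Fin (d + 1) → S)) (l : S) :
    (slc V l).ncard ≤ V.ncard := by
  apply Set.ncard_le_ncard_of_injOn (fun u => (Fin.cons l u : Fin (d + 1) → S))
  · intro u hu; exact hu
  · intro u _ v _ h
    have := congrArg Fin.tail h
    simpa using this

theorem slice_disj_twin {d : ℕ} {V : Set (Fin (d + 1) → S)}
    (hV : ∀ u ∈ V, ∀ v ∈ V, ¬ TwinPair c u v)
    {l : S} {u : Fin d → S} (h1 : u ∈ slc V l) (h2 : u ∈ slc V (c l)) : False := by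
  refine hV _ h1 _ h2 ⟨0, by simp, fun i => ?_⟩
  refine Fin.cases (fun h => absurd rfl h) (fun i _ => by simp) i

theorem slice_ext {d : ℕ} {V W : Set (Fin (d + 1) → S)} (h : ∀ s, slc V s = slc W s) :
    V = W := by
  ext v
  have : Fin.tail v ∈ slc V (v 0) ↔ Fin.tail v ∈ slc W (v 0) := by rw [h]
  simpa [slc] using this

/-- removing common words preserves equivalence -/
theorem diff_equiv {d : ℕ} {V W : Set (Fin d → S)} (hV : PolyboxCode c V)
    (hW : PolyboxCode c W) (h : Equivalent c V W) : Equivalent c (V \ W) (W \ V) := by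
  rw [equiv_iff] at h ⊢
  intro B
  constructor
  · rintro ⟨v, hv, hB⟩
    obtain ⟨w, hw, hBw⟩ := (h B).1 ⟨v, hv.1, hB⟩
    refine ⟨w, ⟨hw, fun hwV => hv.2 ?_⟩, hBw⟩
    rw [realize_uniq hV hv.1 hwV hB hBw]; exact hw
  · rintro ⟨v, hv, hB⟩
    obtain ⟨w, hw, hBw⟩ := (h B).2 ⟨v, hv.1, hB⟩
    refine ⟨w, ⟨hw, fun hwV => hv.2 ?_⟩, hBw⟩
    rw [realize_uniq hW hv.1 hwV hB hBw]; exact hw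

end Words

section Count

variable {S : Type*} {c : S → S}

/-- number of words with a given first letter -/
noncomputable def cnt {d : ℕ} (V : Set (Fin (d + 1) → S)) (s : S) : ℕ :=
  {v ∈ V | v 0 = s}.ncard

open Classical in
/-- the subcube traced by `v` inside the box of `w` -/
noncomputable def trace {d : ℕ} (w τ v : Fin d → S) : Fin d → Option Bool :=
  fun i => if v i = w i then none else some (decide (v i = τ i))

theorem cnt_bound [Finite S] {d : ℕ} (V : Set (Fin (d + 1) → S)) (s : S)
    (φ : (Fin (d + 1) → S) → Fin (d + 1) → Option Bool)
    (Q : Finset (Fin (d + 1) → Option Bool))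
    (h : ∀ q ∈ Q, ∃ v ∈ V, v 0 = s ∧ φ v = q) : Q.card ≤ cnt V s := by
  rw [← Set.ncard_coe_finset]
  refine le_trans (Set.ncard_le_ncard (t := φ '' {v ∈ V | v 0 = s}) ?_ (Set.toFinite _))
    (Set.ncard_image_le (Set.toFinite _))
  intro q hq
  obtain ⟨v, hv, h0, rfl⟩ := h q hq
  exact ⟨v, ⟨hv, h0⟩, rfl⟩

theorem word_count [Finite S] (hinv : ∀ s, c (c s) = s) (hne : ∀ s, c s ≠ s)
    (hall : ∀ s t : S, t ≠ s → t ≠ c s → ∀ r, r = s ∨ r = c s ∨ r = t ∨ r = c t)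
    (htr : ∀ s : S, ∃ t, t ≠ s ∧ t ≠ c s)
    {d : ℕ} {V : Set (Fin (d + 1) → S)} (hV : PolyboxCode c V)
    (hVtf : ∀ u ∈ V, ∀ v ∈ V, ¬ TwinPair c u v)
    (w : Fin (d + 1) → S) (hw : w ∉ V)
    (hcov : ∀ B ∈ realize c w, ∃ v ∈ V, B ∈ realize c v)
    (t : S) (ht1 : t ≠ w 0) (ht2 : t ≠ c (w 0)) :
    5 ≤ cnt V (w 0) ∨ 5 ≤ cnt V t ∨ 5 ≤ cnt V (c t) ∨ (2 ≤ cnt V t ∧ 2 ≤ cnt V (c t)) := by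
  classical
  obtain ⟨τ, hτ0, hτ1, hτ2⟩ : ∃ τ : Fin (d + 1) → S, τ 0 = t ∧ (∀ i, τ i ≠ w i) ∧
      ∀ i, τ i ≠ c (w i) := by
    choose g hg using htr
    refine ⟨fun i => if i = 0 then t else g (w i), by simp, fun i => ?_, fun i => ?_⟩
    · by_cases h : i = 0
      · subst h; simpa using ht1
      · simpa [h] using (hg (w i)).1
    · by_cases h : i = 0
      · subst h; simpa using ht2
      · simpa [h] using (hg (w i)).2
  have hτ3 : ∀ i, c (τ i) ≠ w i := fun i h => hτ2 i (by rw [← h, hinv])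
  have hτ4 : ∀ i, c (τ i) ≠ c (w i) := fun i h => hτ1 i (by rw [← hinv (τ i), h, hinv])
  have hτ5 : ∀ i, c (τ i) ≠ τ i := fun i => hne _
  have hcase : ∀ i r, r ≠ c (w i) → r = w i ∨ r = τ i ∨ r = c (τ i) := by
    intro i r hr
    rcases hall (w i) (τ i) (hτ1 i) (hτ2 i) r with h | h | h | h
    · exact Or.inl h
    · exact absurd h hr
    · exact Or.inr (Or.inl h)
    · exact Or.inr (Or.inr h)
  let pt : (Fin (d + 1) → Bool) → Fin (d + 1) → Set S :=
    fun x i => {w i, if x i then τ i else c (τ i)}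
  have hpt : ∀ x i, pt x i ∈ ESet c := by
    intro x i
    by_cases hx : x i = true
    · have := pair_mem_ESet hinv hne hall (hτ1 i) (hτ2 i)
      simpa [pt, hx] using this
    · have := pair_mem_ESet hinv hne hall (hτ3 i) (hτ4 i)
      simpa [pt, hx] using this
  have hav : ∀ x v, pt x ∈ realize c v → ∀ i, v i ≠ c (w i) := by
    intro x v h i hi
    have h1 := (h i).2
    rw [hi] at h1
    exact (hpt x i (w i)).1 (by simp [pt]) h1
  have hin : ∀ x v, (∀ i, v i ≠ c (w i)) →
      (InCube x (trace w τ v) ↔ pt x ∈ realize c v) := by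
    intro x v hv
    have key : ∀ i, (∀ b, trace w τ v i = some b → x i = b) ↔ v i ∈ pt x i := by
      intro i
      have e1 := hτ1 i
      have e3 := hτ3 i
      have e5 := hτ5 i
      have e6 := e5.symm
      rcases hcase i (v i) (hv i) with h | h | h
      · simp [trace, pt, h]
      · cases hx : x i <;> simp [trace, pt, h, hx, e1, e6]
      · cases hx : x i <;> simp [trace, pt, h, hx, e3, e5]
    constructor
    · intro h i
      exact ⟨hpt x i, (key i).1 (h i)⟩
    · intro h i
      exact (key i).2 (h i).2
  have htrne : ∀ i r, trace w τ r i = none ↔ r i = w i := by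
    intro i r
    by_cases h : r i = w i <;> simp [trace, h]
  have htrt : ∀ i r, (∀ i, r i ≠ c (w i)) → (trace w τ r i = some true ↔ r i = τ i) := by
    intro i r hr
    have e1 := hτ1 i
    by_cases h : r i = w i
    · simp [trace, h, e1.symm]
    · simp [trace, h]
  have htrf : ∀ i r, (∀ i, r i ≠ c (w i)) → (trace w τ r i = some false ↔ r i = c (τ i)) := by
    intro i r hr
    have e1 := hτ1 i
    have e3 := hτ3 i
    have e5 := hτ5 i
    rcases hcase i (r i) (hr i) with h | h | h
    · simp [trace, h, e3.symm]
    · simp [trace, h, e1, e5.symm]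
    · simp [trace, h, e3, e5]
  let A : Set (Fin (d + 1) → S) := {v ∈ V | ∀ i, v i ≠ c (w i)}
  let P : Finset (Fin (d + 1) → Option Bool) := (Set.toFinite (trace w τ '' A)).toFinset
  have hPmem : ∀ p, p ∈ P ↔ ∃ v ∈ V, (∀ i, v i ≠ c (w i)) ∧ trace w τ v = p := by
    intro p
    simp [P, A, and_assoc]
  have hpart : IsPart P (fun _ => none) := by
    refine ⟨?_, ?_, ?_⟩
    · intro p _ x _ i b h
      simp at h
    · intro x _
      obtain ⟨v, hv, hB⟩ := hcov (pt x) (fun i => ⟨hpt x i, by simp [pt]⟩)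
      have hva := hav x v hB
      exact ⟨_, (hPmem _).2 ⟨v, hv, hva, rfl⟩, (hin x v hva).2 hB⟩
    · intro p hp p' hp' x hx hx'
      obtain ⟨v, hv, hva, rfl⟩ := (hPmem p).1 hp
      obtain ⟨v', hv', hva', rfl⟩ := (hPmem p').1 hp'
      rw [realize_uniq hV hv hv' ((hin x v hva).1 hx) ((hin x v' hva').1 hx')]
  have htwin : CubeTwinFree P := by
    intro p hp i b hb hm
    obtain ⟨v, hv, hva, rfl⟩ := (hPmem p).1 hp
    obtain ⟨v', hv', hva', he⟩ := (hPmem _).1 hm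
    refine hVtf v hv v' hv' ⟨i, ?_, fun j hj => ?_⟩
    · have h1 := congrFun he i
      simp only [Function.update_self] at h1
      cases b
      · rw [htrf i v hva] at hb
        have := (htrt i v' hva').1 (by simpa using h1)
        rw [hb, this, hinv]
      · rw [htrt i v hva] at hb
        have := (htrf i v' hva').1 (by simpa using h1)
        rw [hb, this]
    · have h1 := congrFun he j
      simp only [Function.update_of_ne hj] at h1
      rcases hcase j (v j) (hva j) with h | h | h
      · rw [(htrne j v).2 h] at h1
        rw [h, (htrne j v').1 h1]
      · rw [(htrt j v hva).2 h] at h1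
        rw [h, (htrt j v' hva').1 h1]
      · rw [(htrf j v hva).2 h] at h1
        rw [h, (htrf j v' hva').1 h1]
  have hP2 : 2 ≤ P.card := by
    obtain ⟨p, hp, -⟩ := hpart.2.1 (fun _ => true) (fun i b h => by simp at h)
    have hpos : 0 < P.card := Finset.card_pos.2 ⟨p, hp⟩
    by_contra hlt
    obtain ⟨r, hr⟩ := Finset.card_eq_one.1 (show P.card = 1 by omega)
    have hrP : r ∈ P := by rw [hr]; simp
    rw [hr] at hpart
    have := part_single hpart
    obtain ⟨v, hv, -, rfl⟩ := (hPmem r).1 hrP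
    apply hw
    have : v = w := funext fun i => (htrne i v).1 (congrFun this i)
    rwa [← this]
  have hP5 := part_five P htwin _ hpart hP2
  have ih : ∀ R : Finset (Fin (d + 1) → Option Bool), R ⊂ P → ∀ r, IsPart R r →
      2 ≤ R.card → 5 ≤ R.card :=
    fun R hR r h => part_five R (cubeTwinFree_mono hR.1 htwin) r h
  have bt : (P.filter (fun p => p 0 = some true)).card ≤ cnt V t := by
    apply cnt_bound V t (trace w τ)
    intro q hq
    rw [Finset.mem_filter, hPmem] at hq
    obtain ⟨⟨v, hv, hva, rfl⟩, h⟩ := hq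
    exact ⟨v, hv, by rw [(htrt 0 v hva).1 h, hτ0], rfl⟩
  have bf : (P.filter (fun p => p 0 = some false)).card ≤ cnt V (c t) := by
    apply cnt_bound V (c t) (trace w τ)
    intro q hq
    rw [Finset.mem_filter, hPmem] at hq
    obtain ⟨⟨v, hv, hva, rfl⟩, h⟩ := hq
    exact ⟨v, hv, by rw [(htrf 0 v hva).1 h, hτ0], rfl⟩
  by_cases hnt : (P.filter (fun p => p 0 = some true)).Nonempty
  · have hnf := part_other hpart (i := 0) rfl true hnt
    have a1 := part_active hpart htwin ih (i := 0) rfl true hnt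
    have a2 := part_active hpart htwin ih (i := 0) rfl (!true) hnf
    simp only [Bool.not_true, Bool.not_false] at a1 a2
    omega
  · have hnf : ¬ (P.filter (fun p => p 0 = some false)).Nonempty := fun h =>
      hnt (part_other hpart (i := 0) rfl false h)
    left
    refine le_trans hP5 (cnt_bound V (w 0) (trace w τ) P ?_)
    intro q hq
    obtain ⟨v, hv, hva, rfl⟩ := (hPmem q).1 hq
    refine ⟨v, hv, ?_, rfl⟩
    rw [← htrne]
    cases h : trace w τ v 0 with
    | none => rfl
    | some b =>
      cases b
      · exact absurd ⟨_, Finset.mem_filter.2 ⟨hq, h⟩⟩ hnf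
      · exact absurd ⟨_, Finset.mem_filter.2 ⟨hq, h⟩⟩ hnt

theorem cnt_pos [Finite S] {d : ℕ} {V : Set (Fin (d + 1) → S)} {s : S}
    (h : (slc V s).Nonempty) : 1 ≤ cnt V s := by
  obtain ⟨u, hu⟩ := h
  have : 0 < cnt V s := (Set.ncard_pos (Set.toFinite _)).2 ⟨_, hu, by simp⟩
  exact this

theorem cnt_sum [Finite S] {d : ℕ} (V : Set (Fin (d + 1) → S)) {p q r s : S}
    (h1 : p ≠ q) (h2 : p ≠ r) (h3 : p ≠ s) (h4 : q ≠ r) (h5 : q ≠ s) (h6 : r ≠ s) :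
    cnt V p + cnt V q + cnt V r + cnt V s ≤ V.ncard := by
  classical
  have hd : ∀ x y : S, x ≠ y → Disjoint {v ∈ V | v 0 = x} {v ∈ V | v 0 = y} := by
    intro x y hxy
    rw [Set.disjoint_left]
    rintro v ⟨_, hx⟩ ⟨_, hy⟩
    exact hxy (hx.symm.trans hy)
  unfold cnt
  rw [← Set.ncard_union_eq (hd p q h1) (Set.toFinite _) (Set.toFinite _),
    ← Set.ncard_union_eq (Set.disjoint_union_left.2 ⟨hd p r h2, hd q r h4⟩)
      (Set.toFinite _) (Set.toFinite _),
    ← Set.ncard_union_eq (Set.disjoint_union_left.2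
      ⟨Set.disjoint_union_left.2 ⟨hd p s h3, hd q s h5⟩, hd r s h6⟩)
      (Set.toFinite _) (Set.toFinite _)]
  apply Set.ncard_le_ncard _ (Set.toFinite _)
  rintro v (((h | h) | h) | h) <;> exact h.1

/-- the inductive step: disjoint equivalent codes do not exist -/
theorem step [Finite S] (hinv : ∀ s, c (c s) = s) (hne : ∀ s, c s ≠ s)
    (hall : ∀ s t : S, t ≠ s → t ≠ c s → ∀ r, r = s ∨ r = c s ∨ r = t ∨ r = c t)
    (htr : ∀ s : S, ∃ t, t ≠ s ∧ t ≠ c s)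
    {d : ℕ}
    (IH : ∀ V : Set (Fin d → S), PolyboxCode c V → (∀ u ∈ V, ∀ v ∈ V, ¬ TwinPair c u v) →
      V.ncard ≤ 7 → Rigid c V)
    {V W : Set (Fin (d + 1) → S)} (hV : PolyboxCode c V)
    (hVtf : ∀ u ∈ V, ∀ v ∈ V, ¬ TwinPair c u v) (hcard : V.ncard ≤ 7)
    (hW : PolyboxCode c W) (hVW : Equivalent c V W) (hdisj : ∀ v, v ∈ V → v ∉ W) :
    W = ∅ := by
  by_contra hWne
  rw [← ne_eq, ← Set.nonempty_iff_ne_empty] at hWne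
  obtain ⟨w0, hw0⟩ := hWne
  have hrig : ∀ l, Rigid c (slc V l) := fun l =>
    IH _ (slice_code1 hne hV l) (slice_twinfree hVtf l) (le_trans (slice_ncard V l) hcard)
  have hsd : ∀ l u, u ∈ slc V l → u ∉ slc W l := fun l u hu => hdisj _ hu
  have hcinj : ∀ {x y : S}, c x = c y → x = y := fun {x y} h => by
    rw [← hinv x, h, hinv]
  -- every letter occurs in `V`
  have hocc : ∀ m, (slc V m).Nonempty := by
    intro m
    by_contra hem
    rw [Set.not_nonempty_iff_eq_empty] at hem
    have hsl : ∀ l, m ≠ l → m ≠ c l → slc W l ∪ slc W m = slc V l := by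
      intro l h1 h2
      have he := slice_equiv hinv hne hall hVW h1 h2
      rw [hem, Set.union_empty] at he
      exact hrig l _ (slice_code hne hW h2 (fun h => h2 (by rw [h, hinv]))) he
    obtain ⟨a, ha1, ha2⟩ := htr m
    have e1 := hsl a ha1.symm (fun h => ha2 (by rw [h, hinv]))
    have e2 := hsl (c a) (fun h => ha2 (by rw [h, hinv]))
      (by rw [hinv]; exact ha1.symm)
    have hWm : slc W m = ∅ := by
      rw [Set.eq_empty_iff_forall_notMem]
      intro u hu
      exact slice_disj_twin hVtf (e1 ▸ Or.inr hu : u ∈ slc V a) (e2 ▸ Or.inr hu)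
    rw [hWm, Set.union_empty] at e1 e2
    have hem' : ∀ l, slc W l = slc V l → slc W l = ∅ := by
      intro l h
      rw [Set.eq_empty_iff_forall_notMem]
      intro u hu
      exact hsd l u (h ▸ hu) hu
    have e3 : slc W (c m) = slc V (c m) := by
      have he := slice_equiv hinv hne hall hVW (l := a) (m := c m)
        (fun h => ha2 h.symm) (fun h => ha1 (hcinj h).symm)
      rw [← e1, hem' a e1, Set.empty_union, Set.empty_union] at he
      exact hrig (c m) _ (slice_code1 hne hW _) he
    have : Fin.tail w0 ∈ slc W (w0 0) := by simpa [slc] using hw0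
    rcases hall m a ha1 ha2 (w0 0) with h | h | h | h
    · rw [h, hWm] at this; exact this
    · rw [h, hem' _ e3] at this; exact this
    · rw [h, hem' _ e1] at this; exact this
    · rw [h, hem' _ e2] at this; exact this
  -- both types occur in `W`
  have htype : ∀ b, ∃ w ∈ W, w 0 = b ∨ w 0 = c b := by
    intro b
    by_contra hcon
    push Not at hcon
    have hb : ∀ m, m = b ∨ m = c b → slc W m = ∅ := by
      intro m hm
      rw [Set.eq_empty_iff_forall_notMem]
      intro u hu
      have := hcon _ hu
      rcases hm with rfl | rfl
      · exact this.1 rfl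
      · exact this.2 rfl
    obtain ⟨a, ha1, ha2⟩ := htr b
    have hx1 : b ≠ c a := fun h => ha2 (by rw [h, hinv])
    have he1 := slice_equiv hinv hne hall hVW (l := a) (m := b) ha1.symm hx1
    have he2 := slice_equiv hinv hne hall hVW (l := a) (m := c b) ha2.symm
      (fun h => ha1 (hcinj h).symm)
    rw [hb b (Or.inl rfl), Set.union_empty] at he1
    rw [hb (c b) (Or.inr rfl), Set.union_empty] at he2
    have he : Equivalent c (slc V a ∪ slc V b) (slc V a ∪ slc V (c b)) := he1.trans he2.symm
    have hd := diff_equiv (slice_code hne hV hx1 ha2) (slice_code hne hV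
      (fun h => ha1 (hcinj h).symm) (by rw [hinv]; exact ha1)) he
    have hab : ∀ m u, m ≠ a → m ≠ c a → u ∈ slc V a → u ∈ slc V m → False := by
      intro m u h1 h2 hu hm
      obtain ⟨j, hj⟩ := hV _ hu _ hm (fun h => h1 (congrFun h 0).symm)
      revert hj
      refine Fin.cases (fun hj => h2 (by simpa using hj)) (fun j hj => ?_) j
      exact hne (u j) (by simpa using hj.symm)
    have d1 : (slc V a ∪ slc V b) \ (slc V a ∪ slc V (c b)) = slc V b := by
      ext u
      constructor
      · rintro ⟨h | h, h'⟩
        · exact absurd (Or.inl h) h'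
        · exact h
      · intro h
        refine ⟨Or.inr h, ?_⟩
        rintro (h' | h')
        · exact hab b u ha1.symm hx1 h' h
        · exact slice_disj_twin hVtf h h'
    have d2 : (slc V a ∪ slc V (c b)) \ (slc V a ∪ slc V b) = slc V (c b) := by
      ext u
      constructor
      · rintro ⟨h | h, h'⟩
        · exact absurd (Or.inl h) h'
        · exact h
      · intro h
        refine ⟨Or.inr h, ?_⟩
        rintro (h' | h')
        · exact hab (c b) u ha2.symm (fun h => ha1 (hcinj h).symm) h' h
        · exact slice_disj_twin hVtf h' h
    rw [d1, d2] at hd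
    have := hrig b _ (slice_code1 hne hV _) hd
    obtain ⟨u, hu⟩ := hocc b
    exact slice_disj_twin hVtf hu (this ▸ hu)
  -- counting
  have hwc : ∀ w ∈ W, ∀ t, t ≠ w 0 → t ≠ c (w 0) →
      5 ≤ cnt V (w 0) ∨ 5 ≤ cnt V t ∨ 5 ≤ cnt V (c t) ∨ (2 ≤ cnt V t ∧ 2 ≤ cnt V (c t)) := by
    intro w hw t h1 h2
    refine word_count hinv hne hall htr hV hVtf w (fun h => hdisj w h hw) ?_ t h1 h2
    intro B hB
    exact (equiv_iff.1 hVW B).2 ⟨w, hw, hB⟩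
  have hcp : ∀ s, 1 ≤ cnt V s := fun s => cnt_pos (hocc s)
  set a := w0 0 with ha
  obtain ⟨b, hb1, hb2⟩ := htr a
  have hb3 : c b ≠ a := fun h => hb2 (by rw [← h, hinv])
  have hb4 : c b ≠ c a := fun h => hb1 (hcinj h)
  have k1 := hwc w0 hw0 b hb1 hb2
  obtain ⟨w1, hw1, h01⟩ := htype b
  have k2 := hwc w1 hw1 a (by rcases h01 with h | h <;> rw [h]; exacts [hb1.symm, hb3.symm])
    (by rcases h01 with h | h <;> rw [h]
        · exact hb3.symm
        · rw [hinv]; exact hb1.symm)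
  have hsum := cnt_sum V (hne a).symm hb1.symm hb3.symm hb2.symm hb4.symm (hne b).symm
  have p1 := hcp a
  have p2 := hcp (c a)
  have p3 := hcp b
  have p4 := hcp (c b)
  rw [← ha] at k1
  rcases h01 with h | h <;> rw [h] at k2 <;> omega

theorem letters [Fintype S] (hinv : ∀ s, c (c s) = s) (hne : ∀ s, c s ≠ s)
    (hS : Fintype.card S = 4) :
    (∀ s t : S, t ≠ s → t ≠ c s → ∀ r, r = s ∨ r = c s ∨ r = t ∨ r = c t) ∧
    (∀ s : S, ∃ t, t ≠ s ∧ t ≠ c s) := by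
  classical
  constructor
  · intro s t h1 h2 r
    have h3 : c t ≠ s := fun h => h2 (by rw [← h, hinv])
    have h4 : c t ≠ c s := fun h => h1 (by rw [← hinv t, h, hinv])
    have hc : ({s, c s, t, c t} : Finset S).card = 4 := by
      rw [Finset.card_insert_of_notMem, Finset.card_insert_of_notMem,
        Finset.card_pair (hne t).symm]
      · simp [h2.symm, h4.symm]
      · simp [(hne s).symm, h1.symm, h3.symm]
    have hu : ({s, c s, t, c t} : Finset S) = Finset.univ :=
      Finset.eq_univ_of_card _ (by rw [hc, hS])
    have : r ∈ ({s, c s, t, c t} : Finset S) := by rw [hu]; simp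
    simpa using this
  · intro s
    by_contra hcon
    push Not at hcon
    have hu : (Finset.univ : Finset S) ⊆ {s, c s} := by
      intro t _
      by_cases h : t = s
      · simp [h]
      · simp [hcon t h]
    have h1 := Finset.card_le_card hu
    have h2 : ({s, c s} : Finset S).card ≤ 2 := Finset.card_le_two
    rw [Finset.card_univ, hS] at h1
    omega

end Count

/-- Over an alphabet `S = {a, a', b, b'}` with exactly four letters, every
polybox code `V ⊆ S^d` without twin pairs with `|V| ≤ 7` is rigid. -/
theorem rigid_of_card_le_seven {S : Type*} [Fintype S] (c : S → S)
    (hinv : ∀ s, c (c s) = s) (hne : ∀ s, c s ≠ s)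
    (hS : Fintype.card S = 4) {d : ℕ}
    (V : Set (Fin d → S)) (hV : PolyboxCode c V)
    (hVtf : ∀ u ∈ V, ∀ v ∈ V, ¬ TwinPair c u v)
    (hcard : V.ncard ≤ 7) :
    Rigid c V := by
  obtain ⟨hall, htr⟩ := letters hinv hne hS
  induction d with
  | zero =>
    intro W _ hVW
    rw [equiv_iff] at hVW
    have hB : ∀ v : Fin 0 → S, (fun i => i.elim0 : Fin 0 → Set S) ∈ realize c v :=
      fun v i => i.elim0
    ext v
    constructor
    · intro h
      obtain ⟨u, hu, -⟩ := (hVW _).2 ⟨v, h, hB v⟩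
      rwa [Subsingleton.elim v u]
    · intro h
      obtain ⟨u, hu, -⟩ := (hVW _).1 ⟨v, h, hB v⟩
      rwa [Subsingleton.elim v u]
  | succ d IH =>
    intro W hW hVW
    have h1 : PolyboxCode c (V \ W) := fun u hu v hv => hV u hu.1 v hv.1
    have h2 : PolyboxCode c (W \ V) := fun u hu v hv => hW u hu.1 v hv.1
    have hE := diff_equiv hV hW hVW
    have hWV : W \ V = ∅ := step hinv hne hall htr IH h1
      (fun u hu v hv => hVtf u hu.1 v hv.1)
      (le_trans (Set.ncard_le_ncard Set.sdiff_subset (Set.toFinite _)) hcard) h2 hE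
      (fun v hv hv' => hv.2 hv'.1)
    apply Set.Subset.antisymm (Set.sdiff_eq_empty.1 hWV)
    intro v hv
    by_contra hvW
    have hex : ∀ i, ∃ B, B ∈ Eltr c (v i) := by
      intro i
      obtain ⟨t, ht1, ht2⟩ := htr (v i)
      exact ⟨{v i, t}, pair_mem_ESet hinv hne hall ht1 ht2, by simp⟩
    choose B hB using hex
    obtain ⟨w, hw, -⟩ := (equiv_iff.1 hE B).1 ⟨v, ⟨hv, hvW⟩, hB⟩
    rw [hWV] at hw
    exact hw
end
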